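/- arXiv:2310.03527 — 3 statements merged into one kernel-verified Lean document; each statement's English description precedes it below -/
import Mathlib

section
/- Let (X, Y) ∈ {0,1}² be random with X and Y independent, X Bernoulli of parameter a/(1+a) (an arrow entering from the bottom) and Y Bernoulli of parameter 1/(1+b) (an arrow entering from the left). Then the output (T, R) ∈ {0,1}² obtained by applying the stochastic six vertex weight with column rapidity a and row rapidity b to the input (X, Y) satisfies: T and R are independent, T is Bernoulli of parameter a/(1+a), and R is Bernoulli of parameter 1/(1+b). (The one-vertex stationarity lemma of Section 5.4 of the paper.) -/
/-- Bernoulli weight: probability `p` of value `true` and `1 - p` of value `false`. -/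
def bern (p : ℝ) : Bool → ℝ := fun x => if x then p else 1 - p

/-- The stochastic six vertex weight with column rapidity `a`, row rapidity `b` and
anisotropy parameter `t`: the probability of the output pair `(top, right)` given the
input pair `(bottom, left)`, where `p = (1 - ab)/(1 - tab)`. -/
noncomputable def sixVertexKernel (t a b : ℝ) : Bool × Bool → Bool × Bool → ℝ :=
  fun inp out =>
    match inp, out with
    | (false, false), (false, false) => 1
    | (true,  true ), (true,  true ) => 1
    | (true,  false), (true,  false) => t * ((1 - a * b) / (1 - t * a * b))
    | (true,  false), (false, true ) => 1 - t * ((1 - a * b) / (1 - t * a * b))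
    | (false, true ), (false, true ) => (1 - a * b) / (1 - t * a * b)
    | (false, true ), (true,  false) => 1 - (1 - a * b) / (1 - t * a * b)
    | _, _ => 0

/-!
The vertex preserves the number of arrows, so it fixes the inputs `(0, 0)` and `(1, 1)` and acts as
a two-state Markov chain on `(1, 0)` and `(0, 1)`. The transition probabilities `(1, 0) → (0, 1)`
and `(0, 1) → (1, 0)` are in ratio `1 : ab`, while the product measure gives `(1, 0)` and `(0, 1)`
masses in ratio `ab : 1`. Hence the chain is reversible with respect to the product measure, which
is therefore stationary.
-/

/-- Detailed balance (reversibility) of the transition weights `K` with respect to the weights `w`,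
the standard sufficient criterion for stationarity. Neither positivity nor normalization is part of
the notion, so `w` and `K` may be signed, unlike in `ProbabilityTheory.Kernel.IsReversible`. -/
def DetailedBalance {ι R : Type*} [Mul R] (w : ι → R) (K : ι → ι → R) : Prop :=
  ∀ x y, w x * K x y = w y * K y x

theorem DetailedBalance.sum_mul_eq {ι R : Type*} [Fintype ι] [NonAssocSemiring R]
    {w : ι → R} {K : ι → ι → R} (hw : DetailedBalance w K) (hK : ∀ x, ∑ y, K x y = 1) (y : ι) :
    ∑ x, w x * K x y = w y :=
  calc
    ∑ x, w x * K x y = ∑ x, w y * K y x := Finset.sum_congr rfl fun x _ => hw x y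
    _ = w y * ∑ x, K y x := (Finset.mul_sum ..).symm
    _ = w y := by rw [hK, mul_one]

theorem bern_div_one_add_true {a : ℝ} (ha : 1 + a ≠ 0) :
    bern (a / (1 + a)) true = a * bern (a / (1 + a)) false := by
  simp only [bern, if_true, Bool.false_eq_true, if_false]
  field_simp
  ring

theorem bern_one_div_one_add_false {b : ℝ} (hb : 1 + b ≠ 0) :
    bern (1 / (1 + b)) false = b * bern (1 / (1 + b)) true := by
  simp only [bern, if_true, Bool.false_eq_true, if_false]
  field_simp
  ring

theorem sum_sixVertexKernel (t a b : ℝ) (inp : Bool × Bool) :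
    ∑ out, sixVertexKernel t a b inp out = 1 := by
  rcases inp with ⟨_ | _, _ | _⟩ <;> simp [Fintype.sum_prod_type, sixVertexKernel]

section SixVertex

variable {t a b : ℝ}

theorem sixVertexKernel_bottom_to_right (h : 1 - t * a * b ≠ 0) :
    sixVertexKernel t a b (true, false) (false, true) = (1 - t) / (1 - t * a * b) := by
  rw [sixVertexKernel, ← mul_div_assoc, one_sub_div h]
  ring

theorem sixVertexKernel_left_to_top (h : 1 - t * a * b ≠ 0) :
    sixVertexKernel t a b (false, true) (true, false) =
      a * b * ((1 - t) / (1 - t * a * b)) := by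
  rw [sixVertexKernel, one_sub_div h]
  ring

theorem detailedBalance_sixVertexKernel {w : Bool × Bool → ℝ}
    (hw : w (true, false) * sixVertexKernel t a b (true, false) (false, true) =
      w (false, true) * sixVertexKernel t a b (false, true) (true, false)) :
    DetailedBalance w (sixVertexKernel t a b) := by
  rintro ⟨_ | _, _ | _⟩ ⟨_ | _, _ | _⟩
  case false.true.true.false => exact hw.symm
  case true.false.false.true => exact hw
  -- Every other transition is either impossible or a self-loop.
  all_goals simp only [sixVertexKernel, mul_zero]

theorem detailedBalance_bern_mul_bern (ha : 1 + a ≠ 0) (hb : 1 + b ≠ 0)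
    (htab : 1 - t * a * b ≠ 0) :
    DetailedBalance (fun z : Bool × Bool => bern (a / (1 + a)) z.1 * bern (1 / (1 + b)) z.2)
      (sixVertexKernel t a b) := by
  apply detailedBalance_sixVertexKernel
  simp only [bern_div_one_add_true ha, bern_one_div_one_add_false hb,
    sixVertexKernel_bottom_to_right htab, sixVertexKernel_left_to_top htab]
  ring

theorem stmt_5_general (ha : 1 + a ≠ 0) (hb : 1 + b ≠ 0) (htab : 1 - t * a * b ≠ 0) (T R : Bool) :
    (∑ x : Bool, ∑ y : Bool,
      bern (a / (1 + a)) x * bern (1 / (1 + b)) y * sixVertexKernel t a b (x, y) (T, R)) =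
      bern (a / (1 + a)) T * bern (1 / (1 + b)) R := by
  rw [← Fintype.sum_prod_type']
  exact (detailedBalance_bern_mul_bern ha hb htab).sum_mul_eq (sum_sixVertexKernel t a b) (T, R)

end SixVertex

/-- if the bottom input `X` is Bernoulli(`a/(1+a)`) and the left input `Y`
is Bernoulli(`1/(1+b)`), independently, then the output `(T, R)` of the stochastic six
vertex weight has `T` and `R` independent, with `T` Bernoulli(`a/(1+a)`) and `R`
Bernoulli(`1/(1+b)`): the joint output distribution is the corresponding product. -/
theorem stmt_5 (t a b : ℝ) (ht0 : 0 ≤ t) (ht1 : t < 1)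
    (ha : a ∈ Set.Ioo (0 : ℝ) 1) (hb : b ∈ Set.Ioo (0 : ℝ) 1) :
    ∀ T R : Bool,
      (∑ x : Bool, ∑ y : Bool,
        bern (a / (1 + a)) x * bern (1 / (1 + b)) y * sixVertexKernel t a b (x, y) (T, R)) =
      bern (a / (1 + a)) T * bern (1 / (1 + b)) R := by
  have htab : t * a * b < 1 := mul_lt_one_of_nonneg_of_lt_one_right
    (mul_le_one₀ ht1.le ha.1.le ha.2.le) hb.1.le hb.2
  exact stmt_5_general (add_pos one_pos ha.1).ne' (add_pos one_pos hb.1).ne' (sub_pos.2 htab).ne'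
end

section
/- Fix M ≥ 1, real parameters t ∈ [0,1), column rapidities a_1,…,a_M ∈ (0,1), and a row rapidity b ∈ (0,1). Consider a single row of M stochastic six vertex weights in which vertex i has column rapidity a_i and row rapidity b, the right output of vertex i is the left input of vertex i+1, H_0 denotes the left input of vertex 1, H_M the right output of vertex M, and T_1,…,T_M the top outputs. If the bottom inputs B_1,…,B_M together with H_0 are jointly independent, with B_i Bernoulli of parameter a_i/(1+a_i) and H_0 Bernoulli of parameter 1/(1+b), then the outputs T_1,…,T_M, H_M are jointly independent, with T_i Bernoulli of parameter a_i/(1+a_i) and H_M Bernoulli of parameter 1/(1+b). (The Bernoulli propagation claim of Section 5.4, used to identify the stationary distributions of the periodic six vertex model.) -/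
/-!
Each vertex is reversible for the product of its two Bernoulli weights: the only exchange is between
the inputs `(1, 0)` and `(0, 1)`, whose weights are in the ratio `ab : 1`, and the formula for `p`
says exactly that `ab (1 - tp) = 1 - p`. Hence each vertex preserves this product. Consequently,
once the bottom inputs are averaged and the top outputs fixed, the horizontal weight is a common
left eigenvector of the transfer matrices of all vertices, with the weight of the top output as
eigenvalue, and these eigenvalues multiply along the row.
-/

section Row

open Matrix

variable {R α β γ : Type*} [CommSemiring R] [Fintype α]

/-- The transfer matrix, from the left to the right edge, of a vertex with weights `K` whose bottom
edge is summed against `μ` and whose top edge is fixed to `x`. A row of vertices acts on the weights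
of the horizontal edge by the product of these matrices. -/
def horizontalTransfer (μ : α → R) (K : α × β → γ × β → R) (x : γ) : Matrix β β R :=
  .of fun v w => ∑ u, μ u * K (u, v) (x, w)

theorem prod_horizontalTransfer_apply {ι : Type*} [Fintype ι] [DecidableEq ι] (μ : ι → α → R)
    (K : ι → α × β → γ × β → R) (x : ι → γ) (v w : ι → β) :
    ∏ i, horizontalTransfer (μ i) (K i) (x i) (v i) (w i) =
      ∑ u : ι → α, (∏ i, μ i (u i)) * ∏ i, K i (u i, v i) (x i, w i) := by
  simp only [horizontalTransfer, of_apply, Fintype.prod_sum, Finset.prod_mul_distrib]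

variable [Fintype β]

theorem sum_path_of_vecMul_eq_smul (ν f : β → R) {M : ℕ} (L : Fin M → Matrix β β R)
    (c : Fin M → R) (hL : ∀ i, ν ᵥ* L i = c i • ν) :
    ∑ g : Fin (M + 1) → β,
        ν (g 0) * (∏ i : Fin M, L i (g i.castSucc) (g i.succ)) * f (g (Fin.last M)) =
      (∏ i, c i) * (ν ⬝ᵥ f) := by
  induction M with
  | zero =>
    rw [← (Equiv.funUnique (Fin 1) β).symm.sum_comp]
    simp [dotProduct]
  | succ M ih =>
    have sum_first_step (y : β) : ∑ x, ν x * L 0 x y = c 0 * ν y := congrFun (hL 0) y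
    calc
      _ = ∑ x, ∑ g : Fin (M + 1) → β,
            ν x * L 0 x (g 0) *
              (∏ i : Fin M, L i.succ (g i.castSucc) (g i.succ)) * f (g (Fin.last M)) := by
        rw [← (Fin.consEquiv fun _ => β).sum_comp, Fintype.sum_prod_type]
        simp only [Fin.consEquiv_apply, Fin.prod_univ_succ (n := M), Fin.cons_zero, Fin.cons_succ,
          Fin.castSucc_zero, ← Fin.succ_last, ← Fin.succ_castSucc, mul_assoc]
      _ = ∑ g : Fin (M + 1) → β, c 0 * ν (g 0) *
            (∏ i : Fin M, L i.succ (g i.castSucc) (g i.succ)) * f (g (Fin.last M)) := by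
        rw [Finset.sum_comm]
        simp only [← Finset.sum_mul, sum_first_step]
      _ = (∏ i, c i) * (ν ⬝ᵥ f) := by
        simp only [mul_assoc (c 0), ← Finset.mul_sum]
        rw [ih _ _ fun i => hL i.succ, Fin.prod_univ_succ, mul_assoc]

theorem sum_row_of_vecMul_horizontalTransfer {M : ℕ} (μ : Fin M → α → R) (ν f : β → R)
    (K : Fin M → α × β → γ × β → R) (x : Fin M → γ) (c : Fin M → R)
    (hK : ∀ i, ν ᵥ* horizontalTransfer (μ i) (K i) (x i) = c i • ν) :
    ∑ u : Fin M → α, ∑ g : Fin (M + 1) → β,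
        f (g (Fin.last M)) * ((∏ i, μ i (u i)) * ν (g 0)) *
          ∏ i : Fin M, K i (u i, g i.castSucc) (x i, g i.succ) =
      (∏ i, c i) * (ν ⬝ᵥ f) := by
  rw [← sum_path_of_vecMul_eq_smul ν f _ c hK, Finset.sum_comm]
  refine Finset.sum_congr rfl fun g _ => ?_
  rw [prod_horizontalTransfer_apply, Finset.mul_sum, Finset.sum_mul]
  exact Finset.sum_congr rfl fun u _ => by ring

end Row

section Vertex

open Matrix

variable {t a b : ℝ} (htab : t * a * b ≠ 1) (ha : 1 + a ≠ 0) (hb : 1 + b ≠ 0)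
include htab ha hb

theorem sixVertexKernel_detailed_balance (u v x y : Bool) :
    bern (a / (1 + a)) u * bern (1 / (1 + b)) v * sixVertexKernel t a b (u, v) (x, y) =
      bern (a / (1 + a)) x * bern (1 / (1 + b)) y * sixVertexKernel t a b (x, y) (u, v) := by
  have exchange : bern (a / (1 + a)) true * bern (1 / (1 + b)) false *
        sixVertexKernel t a b (true, false) (false, true) =
      bern (a / (1 + a)) false * bern (1 / (1 + b)) true *
        sixVertexKernel t a b (false, true) (true, false) := by
    simp only [bern, sixVertexKernel, if_true, Bool.false_eq_true, if_false]
    set p := (1 - a * b) / (1 - t * a * b)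
    have hp : p * (1 - t * a * b) = 1 - a * b := div_mul_cancel₀ _ (sub_ne_zero.mpr htab.symm)
    calc a / (1 + a) * (1 - 1 / (1 + b)) * (1 - t * p)
        = a * b * (1 - t * p) / ((1 + a) * (1 + b)) := by field_simp; ring
      _ = (1 - p) / ((1 + a) * (1 + b)) := by congr 1; linear_combination hp
      _ = (1 - a / (1 + a)) * (1 / (1 + b)) * (1 - p) := by field_simp; ring
  cases u <;> cases v <;> cases x <;> cases y <;>
    first
    | rfl
    | exact exchange
    | exact exchange.symm
    | simp only [sixVertexKernel, mul_zero]

theorem sum_bern_mul_sixVertexKernel (x y : Bool) :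
    ∑ v, ∑ u, bern (a / (1 + a)) u * bern (1 / (1 + b)) v * sixVertexKernel t a b (u, v) (x, y) =
      bern (a / (1 + a)) x * bern (1 / (1 + b)) y := by
  simp only [sixVertexKernel_detailed_balance htab ha hb _ _ x y, ← Finset.mul_sum]
  rw [Finset.sum_comm, ← Fintype.sum_prod_type', sum_sixVertexKernel, mul_one]

theorem bern_vecMul_horizontalTransfer (x : Bool) :
    bern (1 / (1 + b)) ᵥ* horizontalTransfer (bern (a / (1 + a))) (sixVertexKernel t a b) x =
      bern (a / (1 + a)) x • bern (1 / (1 + b)) := by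
  ext y
  simp only [vecMul, dotProduct, horizontalTransfer, of_apply, Finset.mul_sum, Pi.smul_apply,
    smul_eq_mul, ← sum_bern_mul_sixVertexKernel htab ha hb x y]
  exact Finset.sum_congr rfl fun v _ => Finset.sum_congr rfl fun u _ => by ring

end Vertex

theorem mul_mul_lt_one_of_mem_Ioo {t a b : ℝ} (ht : t < 1) (ha : a ∈ Set.Ioo (0 : ℝ) 1)
    (hb : b ∈ Set.Ioo (0 : ℝ) 1) : t * a * b < 1 := by
  have hab : a * b < 1 := mul_lt_one_of_nonneg_of_lt_one_left ha.1.le ha.2 hb.2.le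
  calc t * a * b = t * (a * b) := mul_assoc t a b
    _ < a * b := mul_lt_of_lt_one_left (mul_pos ha.1 hb.1) ht
    _ < 1 := hab

theorem stmt_6_general {M : ℕ} {t b : ℝ} {a : Fin M → ℝ} (htab : ∀ i, t * a i * b ≠ 1)
    (ha : ∀ i, 1 + a i ≠ 0) (hb : 1 + b ≠ 0) (τ : Fin M → Bool) (η : Bool) :
    (∑ B : Fin M → Bool, ∑ g : Fin (M + 1) → Bool,
      (if g (Fin.last M) = η then (1 : ℝ) else 0) *
        ((∏ i, bern (a i / (1 + a i)) (B i)) * bern (1 / (1 + b)) (g 0)) *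
        ∏ i : Fin M, sixVertexKernel t (a i) b (B i, g i.castSucc) (τ i, g i.succ)) =
    (∏ i, bern (a i / (1 + a i)) (τ i)) * bern (1 / (1 + b)) η := by
  rw [sum_row_of_vecMul_horizontalTransfer (fun i => bern (a i / (1 + a i))) (bern (1 / (1 + b)))
    (fun y => if y = η then 1 else 0) (fun i => sixVertexKernel t (a i) b) τ _
    fun i => bern_vecMul_horizontalTransfer (htab i) (ha i) hb (τ i)]
  simp [dotProduct]

/-- Bernoulli propagation through a row of `M` stochastic six vertex
weights.  Vertex `i` has column rapidity `a i` and row rapidity `b`; the horizontal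
edges are `g 0` (the left boundary `H₀`), internal edges, and `g M` (the right output
`H_M`); `B i` is the bottom input and `τ i` the top output of vertex `i`.  If the
bottom inputs and `H₀` are jointly independent, with `B i` Bernoulli(`a i/(1+a i)`) and
`H₀` Bernoulli(`1/(1+b)`), then the joint distribution of the outputs `(τ, H_M)` is the
product of Bernoulli(`a i/(1+a i)`) for `τ i` and Bernoulli(`1/(1+b)`) for `H_M`. -/
theorem stmt_6 (M : ℕ) (hM : 1 ≤ M) (t : ℝ) (ht0 : 0 ≤ t) (ht1 : t < 1)
    (a : Fin M → ℝ) (ha : ∀ i, a i ∈ Set.Ioo (0 : ℝ) 1)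
    (b : ℝ) (hb : b ∈ Set.Ioo (0 : ℝ) 1)
    (τ : Fin M → Bool) (η : Bool) :
    (∑ B : Fin M → Bool, ∑ g : Fin (M + 1) → Bool,
      (if g (Fin.last M) = η then (1 : ℝ) else 0) *
        ((∏ i, bern (a i / (1 + a i)) (B i)) * bern (1 / (1 + b)) (g 0)) *
        ∏ i : Fin M, sixVertexKernel t (a i) b (B i, g i.castSucc) (τ i, g i.succ)) =
    (∏ i, bern (a i / (1 + a i)) (τ i)) * bern (1 / (1 + b)) η := by
  exact stmt_6_general (fun i => (mul_mul_lt_one_of_mem_Ioo ht1 (ha i) hb).ne)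
    (fun i => (add_pos one_pos (ha i).1).ne') (add_pos one_pos hb.1).ne' τ η
end

section
/- Let S be a finite nonempty set and for each u ∈ (0,1] let P(u) be a row-stochastic S×S real matrix. Assume: (i) u ↦ P(u) is entrywise continuous at u = 1 (from within (0,1]); (ii) there exist constants C > 0 and c > 0 such that ‖μ·P(1)^n − ν·P(1)^n‖₁ ≤ C·e^{−c·n} for all probability row-vectors μ, ν and all n ∈ ℕ; (iii) for every u ∈ (0,1) the limit Q(u) := lim_{L→∞} P(u^{L−1})·P(u^{L−2})⋯P(u)·P(u^0) exists entrywise. Then the limit Π := lim_{n→∞} P(1)^n exists entrywise, and Q(u) converges entrywise to Π as u → 1⁻. (This is Proposition 5.4 of the paper, the convergence of the quasi-periodic six vertex model to the stationary periodic six vertex model, stated in its abstract Markov-matrix form, equation (matrix limits).) -/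
/-!
Mixing, applied to the two laws `μ * T` and `μ`, says that `T * P 1 ^ n - P 1 ^ n` tends to `0` at a
rate independent of the stochastic matrix `T`. With `T = P 1 ^ k` this makes `P 1 ^ n` a Cauchy
sequence, and its limit `Π` satisfies `T * Π = Π` for every `T`. A partial product of `Q u` is
`T * B`, with `B` the product of its first `n` factors and `T` stochastic, and
`T * B - Π = T * (B - Π)`, so `Q u` is at most as far from `Π` as `B` is, however many factors `T`
collects. For fixed `n`, `B` tends to `P 1 ^ n` as `u → 1⁻`, which is close to `Π` for large `n`.

For matrices the relevant norm is the `ℓ^∞` operator norm, the largest `ℓ¹` norm of a row.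
-/

open Filter

open scoped Topology

section DescProd

variable {M : Type*} [Monoid M]

/-- The ordered product `f (n - 1) * ⋯ * f 1 * f 0`, in which each new factor enters on the left:
the first `n` steps of a time-inhomogeneous chain acting on columns. -/
def descProd (f : ℕ → M) (n : ℕ) : M :=
  ((List.range n).reverse.map f).prod

theorem descProd_const (a : M) (n : ℕ) : descProd (fun _ => a) n = a ^ n := by
  simp [descProd]

theorem descProd_add (f : ℕ → M) (n m : ℕ) :
    descProd f (n + m) = descProd (fun k => f (n + k)) m * descProd f n := by
  simp [descProd, List.range_add, List.map_reverse, Function.comp_def]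

theorem descProd_mem {s : Submonoid M} {f : ℕ → M} (hf : ∀ k, f k ∈ s) (n : ℕ) :
    descProd f n ∈ s :=
  s.list_prod_mem <| List.forall_mem_map.2 fun k _ => hf k

theorem tendsto_descProd [TopologicalSpace M] [ContinuousMul M] {X : Type*} {l : Filter X}
    {f : X → ℕ → M} {g : ℕ → M} (hf : ∀ k, Tendsto (f · k) l (𝓝 (g k))) (n : ℕ) :
    Tendsto (fun x => descProd (f x) n) l (𝓝 (descProd g n)) :=
  tendsto_list_prod (f := fun k x => f x k) _ fun k _ => hf k

end DescProd

section NormedRing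

variable {R : Type*}

theorem exists_tendsto_pow_of_norm_mul_pow_sub_pow_le [NormedRing R] [CompleteSpace R]
    {s : Submonoid R} {p : R} (hp : p ∈ s) {b : ℕ → ℝ} (hb : Tendsto b atTop (𝓝 0))
    (hmix : ∀ a ∈ s, ∀ n, ‖a * p ^ n - p ^ n‖ ≤ b n) :
    ∃ q, Tendsto (p ^ ·) atTop (𝓝 q) ∧ ∀ a ∈ s, a * q = q := by
  have hcauchy : CauchySeq (p ^ ·) := by
    refine cauchySeq_of_le_tendsto_0' b (fun n m hnm => ?_) hb
    obtain ⟨k, rfl⟩ := Nat.exists_eq_add_of_le' hnm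
    rw [dist_comm, dist_eq_norm, pow_add]
    exact hmix _ (s.pow_mem hp k) n
  obtain ⟨q, hq⟩ := cauchySeq_tendsto_of_complete hcauchy
  refine ⟨q, hq, fun a ha => sub_eq_zero.1 ?_⟩
  exact tendsto_nhds_unique ((hq.const_mul a).sub hq) (squeeze_zero_norm (hmix a ha) hb)

theorem norm_sub_le_of_tendsto_descProd [SeminormedRing R] {s : Submonoid R} {K : ℝ}
    (hK : ∀ a ∈ s, ‖a‖ ≤ K) {q : R} (hq : ∀ a ∈ s, a * q = q) {f : ℕ → R} (hf : ∀ k, f k ∈ s)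
    {r : R} (hr : Tendsto (descProd f) atTop (𝓝 r)) (n : ℕ) :
    ‖r - q‖ ≤ K * ‖descProd f n - q‖ := by
  refine le_of_tendsto (hr.sub_const q).norm ?_
  filter_upwards [eventually_ge_atTop n] with L hL
  obtain ⟨m, rfl⟩ := Nat.exists_eq_add_of_le hL
  have htail : descProd (fun k => f (n + k)) m ∈ s := descProd_mem (fun k => hf (n + k)) m
  calc ‖descProd f (n + m) - q‖
      = ‖descProd (fun k => f (n + k)) m * (descProd f n - q)‖ := by
        rw [descProd_add, mul_sub, hq _ htail]
    _ ≤ K * ‖descProd f n - q‖ := norm_mul_le_of_le (hK _ htail) le_rfl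

theorem tendsto_of_tendsto_descProd [SeminormedRing R] {s : Submonoid R} {K : ℝ}
    (hK : ∀ a ∈ s, ‖a‖ ≤ K) {p q : R} (hpq : Tendsto (p ^ ·) atTop (𝓝 q))
    (hq : ∀ a ∈ s, a * q = q) {X : Type*} {l : Filter X} {f : X → ℕ → R}
    (hfs : ∀ᶠ x in l, ∀ k, f x k ∈ s) (hfp : ∀ k, Tendsto (f · k) l (𝓝 p)) {r : X → R}
    (hr : ∀ᶠ x in l, Tendsto (descProd (f x)) atTop (𝓝 (r x))) :
    Tendsto r l (𝓝 q) := by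
  have hpow : Tendsto (fun n => K * ‖p ^ n - q‖) atTop (𝓝 0) := by
    simpa using (tendsto_iff_norm_sub_tendsto_zero.1 hpq).const_mul K
  have hprod (n : ℕ) :
      Tendsto (fun x => K * ‖descProd (f x) n - q‖) l (𝓝 (K * ‖p ^ n - q‖)) := by
    simpa only [descProd_const] using
      (((tendsto_descProd hfp n).sub_const q).norm).const_mul K
  rw [Metric.tendsto_nhds]
  intro ε hε
  obtain ⟨n, hn⟩ := (hpow.eventually_lt_const hε).exists
  filter_upwards [hfs, hr, (hprod n).eventually_lt_const hn] with x hxs hxr hx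
  rw [dist_eq_norm]
  exact (norm_sub_le_of_tendsto_descProd hK hq hxs hxr n).trans_lt hx

/-- In the matrix case `s` consists of the stochastic matrices, `x` is the parameter `u`, and
`f x k = P (u ^ k)`. -/
theorem stmt_7_general [NormedRing R] [CompleteSpace R] {s : Submonoid R} {K : ℝ}
    (hK : ∀ a ∈ s, ‖a‖ ≤ K) {p : R} (hp : p ∈ s) {b : ℕ → ℝ} (hb : Tendsto b atTop (𝓝 0))
    (hmix : ∀ a ∈ s, ∀ n, ‖a * p ^ n - p ^ n‖ ≤ b n) {X : Type*} {l : Filter X}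
    {f : X → ℕ → R} (hfs : ∀ᶠ x in l, ∀ k, f x k ∈ s)
    (hfp : ∀ k, Tendsto (f · k) l (𝓝 p)) {r : X → R}
    (hr : ∀ᶠ x in l, Tendsto (descProd (f x)) atTop (𝓝 (r x))) :
    ∃ q, Tendsto (p ^ ·) atTop (𝓝 q) ∧ Tendsto r l (𝓝 q) := by
  obtain ⟨q, hpq, hq⟩ := exists_tendsto_pow_of_norm_mul_pow_sub_pow_le hp hb hmix
  exact ⟨q, hpq, tendsto_of_tendsto_descProd hK hpq hq hfs hfp hr⟩

end NormedRing

section RowStochastic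

open scoped Matrix.Norms.Operator

variable {m n : Type*} [Fintype m] [Fintype n]

theorem linfty_opNorm_le_iff {α : Type*} [SeminormedAddCommGroup α] {A : Matrix m n α} {r : ℝ}
    (hr : 0 ≤ r) : ‖A‖ ≤ r ↔ ∀ i, ∑ j, ‖A i j‖ ≤ r := by
  lift r to NNReal using hr
  simp only [← coe_nnnorm, ← NNReal.coe_sum, NNReal.coe_le_coe, Matrix.linfty_opNNNorm_def,
    Finset.sup_le_iff, Finset.mem_univ, true_imp_iff]

variable [DecidableEq n] {A B : Matrix n n ℝ}

theorem linfty_opNorm_le_one_of_mem_rowStochastic (hA : A ∈ Matrix.rowStochastic ℝ n) :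
    ‖A‖ ≤ 1 := by
  refine (linfty_opNorm_le_iff zero_le_one).2 fun i => ?_
  simp only [Real.norm_of_nonneg (Matrix.nonneg_of_mem_rowStochastic hA),
    Matrix.sum_row_of_mem_rowStochastic hA, le_refl]

theorem linfty_opNorm_mul_sub_mul_le {D : Matrix n m ℝ} {r : ℝ} (hr : 0 ≤ r)
    (hD : ∀ μ ν : n → ℝ, (∀ i, 0 ≤ μ i) → ∑ i, μ i = 1 → (∀ i, 0 ≤ ν i) → ∑ i, ν i = 1 →
      ∑ j, |Matrix.vecMul μ D j - Matrix.vecMul ν D j| ≤ r)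
    (hA : A ∈ Matrix.rowStochastic ℝ n) (hB : B ∈ Matrix.rowStochastic ℝ n) :
    ‖A * D - B * D‖ ≤ r := by
  refine (linfty_opNorm_le_iff hr).2 fun i => ?_
  simpa only [Matrix.sub_apply, Matrix.mul_apply_eq_vecMul, Real.norm_eq_abs] using
    hD (A i) (B i) (fun _ => Matrix.nonneg_of_mem_rowStochastic hA)
      (Matrix.sum_row_of_mem_rowStochastic hA i) (fun _ => Matrix.nonneg_of_mem_rowStochastic hB)
      (Matrix.sum_row_of_mem_rowStochastic hB i)

end RowStochastic

theorem tendsto_const_mul_exp_neg_mul_natCast (C : ℝ) {c : ℝ} (hc : 0 < c) :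
    Tendsto (fun n : ℕ => C * Real.exp (-c * n)) atTop (𝓝 0) := by
  have hexp : Tendsto (fun n : ℕ => Real.exp (-c * n)) atTop (𝓝 0) :=
    Real.tendsto_exp_comp_nhds_zero.2 <|
      tendsto_natCast_atTop_atTop.const_mul_atTop_of_neg (neg_lt_zero.2 hc)
  simpa only [mul_zero] using hexp.const_mul C

theorem pow_mem_Ioc_zero_one {u : ℝ} (hu : u ∈ Set.Ioc (0 : ℝ) 1) (k : ℕ) :
    u ^ k ∈ Set.Ioc (0 : ℝ) 1 :=
  ⟨pow_pos hu.1 k, pow_le_one₀ hu.1.le hu.2⟩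

theorem tendsto_pow_nhdsWithin_Ioc_one (k : ℕ) :
    Tendsto (fun u : ℝ => u ^ k) (𝓝[Set.Ioc 0 1] 1) (𝓝[Set.Ioc 0 1] 1) := by
  simpa only [one_pow] using (continuous_pow k).continuousWithinAt.tendsto_nhdsWithin
    (x := (1 : ℝ)) fun u hu => pow_mem_Ioc_zero_one hu k

/-- Let `S` be a finite nonempty set and, for each `u ∈ (0,1]`, let `P u`
be a row-stochastic `S×S` matrix.  Assume (i) entrywise continuity of `u ↦ P u` at
`u = 1` from within `(0,1]`; (ii) uniform exponential mixing for `P 1`: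
`‖μ·(P 1)^n − ν·(P 1)^n‖₁ ≤ C·e^{−c·n}` for all probability row-vectors `μ, ν`;
(iii) for every `u ∈ (0,1)` the ordered product `P(u^{L−1})·P(u^{L−2})⋯P(u^0)`
converges entrywise to some matrix `Q u` as `L → ∞`.  Then `Π := lim_{n→∞} (P 1)^n`
exists and `Q u → Π` entrywise as `u → 1⁻`. -/
theorem stmt_7 {S : Type*} [Fintype S] [Nonempty S] [DecidableEq S]
    (P : ℝ → Matrix S S ℝ)
    (hnn : ∀ u ∈ Set.Ioc (0 : ℝ) 1, ∀ i j, 0 ≤ P u i j)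
    (hrow : ∀ u ∈ Set.Ioc (0 : ℝ) 1, ∀ i, ∑ j, P u i j = 1)
    (hcont : ∀ i j, ContinuousWithinAt (fun u => P u i j) (Set.Ioc (0 : ℝ) 1) 1)
    (C c : ℝ) (hC : 0 < C) (hc : 0 < c)
    (hmix : ∀ μ ν : S → ℝ, (∀ i, 0 ≤ μ i) → ∑ i, μ i = 1 →
      (∀ i, 0 ≤ ν i) → ∑ i, ν i = 1 → ∀ n : ℕ,
      ∑ j, |Matrix.vecMul μ ((P 1) ^ n) j - Matrix.vecMul ν ((P 1) ^ n) j| ≤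
        C * Real.exp (-c * n))
    (Q : ℝ → Matrix S S ℝ)
    (hQ : ∀ u ∈ Set.Ioo (0 : ℝ) 1,
      Tendsto (fun L => ((List.range L).reverse.map fun i => P (u ^ i)).prod)
        atTop (nhds (Q u))) :
    ∃ Pi : Matrix S S ℝ,
      Tendsto (fun n => (P 1) ^ n) atTop (nhds Pi) ∧
      Tendsto Q (nhdsWithin 1 (Set.Ioo (0 : ℝ) 1)) (nhds Pi) := by
  have hstoch : ∀ u ∈ Set.Ioc (0 : ℝ) 1, P u ∈ Matrix.rowStochastic ℝ S := fun u hu =>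
    Matrix.mem_rowStochastic_iff_sum.2 ⟨hnn u hu, hrow u hu⟩
  have hP : ContinuousWithinAt P (Set.Ioc (0 : ℝ) 1) 1 :=
    continuousWithinAt_pi.2 fun i => continuousWithinAt_pi.2 fun j => hcont i j
  have hPpow : ∀ k, Tendsto (fun u => P (u ^ k)) (𝓝[Set.Ioo 0 1] 1) (𝓝 (P 1)) := fun k =>
    hP.tendsto.comp <|
      (tendsto_pow_nhdsWithin_Ioc_one k).mono_left (nhdsWithin_mono 1 Set.Ioo_subset_Ioc_self)
  have hstoch_pow : ∀ u ∈ Set.Ioo (0 : ℝ) 1, ∀ k, P (u ^ k) ∈ Matrix.rowStochastic ℝ S :=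
    fun u hu k => hstoch _ (pow_mem_Ioc_zero_one (Set.Ioo_subset_Ioc_self hu) k)
  open scoped Matrix.Norms.Operator in
  have hmix_norm : ∀ A ∈ Matrix.rowStochastic ℝ S, ∀ n : ℕ,
      ‖A * P 1 ^ n - P 1 ^ n‖ ≤ C * Real.exp (-c * n) := fun A hA n => by
    simpa only [one_mul] using linfty_opNorm_mul_sub_mul_le (by positivity)
      (fun μ ν hμ hμ' hν hν' => hmix μ ν hμ hμ' hν hν' n) hA (one_mem _)
  open scoped Matrix.Norms.Operator in
  exact stmt_7_general (fun A hA => linfty_opNorm_le_one_of_mem_rowStochastic hA)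
    (hstoch 1 ⟨one_pos, le_rfl⟩) (tendsto_const_mul_exp_neg_mul_natCast C hc) hmix_norm
    (eventually_mem_nhdsWithin.mono hstoch_pow) hPpow (eventually_mem_nhdsWithin.mono hQ)
end
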